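/- Let A be an abelian category and let E be an n-extension 0 → B → E₁ → ... → Eₙ → A → 0 with class e. Suppose there is a morphism of complexes φ : E → G to an (n-1)-extension G = (0 → B → G₁ → ... → G_{n-1} → Eₙ → 0) inducing the identity on B and Eₙ. Fix 2 ≤ k ≤ n−1 and suppose φᵢ is injective for all i > k. Let Ē_k := E_k / Ker(φ_k) and Ē_{k-1} := G_{k-1} ×_{G_k} Ē_k (fiber product over the induced maps). Then the sequence 0 → B → G₁ → ... → G_{k-2} → Ē_{k-1} → Ē_k → E_{k+1} → ... → Eₙ → A → 0 is an n-extension representing the same Yoneda class e. -/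

import Mathlib

open CategoryTheory Category Limits ZeroObject

universe v u

/-- The data of a sequence `X 0 ⟶ X 1 ⟶ ⋯ ⟶ X (n+1)` in an abelian category;
an `n`-extension of `X (n+1)` by `X 0` when `IsExt` holds. -/
structure PreExt (C : Type u) [Category.{v} C] [Abelian C] (n : ℕ) where
  X : ℕ → C
  d : ∀ i, X i ⟶ X (i + 1)

namespace PreExt

variable {C : Type u} [Category.{v} C] [Abelian C] {n : ℕ}

/-- `E` is an exact `n`-extension: `0 → X 0 → ⋯ → X (n+1) → 0` is exact. -/
def IsExt (E : PreExt C n) : Prop :=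
  Mono (E.d 0) ∧ Epi (E.d n) ∧
    ∀ i, i + 1 ≤ n → ∃ w : E.d i ≫ E.d (i + 1) = 0,
      (ShortComplex.mk (E.d i) (E.d (i + 1)) w).Exact

/-- A morphism of `n`-extensions inducing the identity on both ends. -/
def Ladder (E F : PreExt C n) : Prop :=
  ∃ (h0 : E.X 0 = F.X 0) (h1 : E.X (n + 1) = F.X (n + 1))
    (φ : ∀ i, E.X i ⟶ F.X i),
    φ 0 = eqToHom h0 ∧ φ (n + 1) = eqToHom h1 ∧
    ∀ i, i ≤ n → E.d i ≫ φ (i + 1) = φ i ≫ F.d i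

/-- One step of the Yoneda equivalence relation. -/
def ExtRel (E F : PreExt C n) : Prop := E.IsExt ∧ F.IsExt ∧ Ladder E F

/-- Yoneda equivalence of `n`-extensions: the equivalence relation generated by
morphisms of extensions inducing the identity on both ends. -/
def YEquiv (E F : PreExt C n) : Prop := Relation.EqvGen ExtRel E F

end PreExt

section Triv

variable {C : Type u} [Category.{v} C] [Abelian C] (n : ℕ)

/-- Objects of the trivial ("split") `n`-extension `0 → B → B → 0 → ⋯ → 0 → A → A → 0`. -/
noncomputable def trivX (A B : C) : ℕ → C :=
  fun i => if i ≤ 1 then B else if n ≤ i then A else 0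

/-- The trivial `n`-extension of `A` by `B` (for `2 ≤ n`). -/
noncomputable def trivPreExt (hn : 2 ≤ n) (A B : C) : PreExt C n where
  X := trivX n A B
  d i :=
    if h : i = 0 then eqToHom (by subst h; simp [trivX]) else
    if h' : i = n then eqToHom (by
      subst h'; simp only [trivX]
      rw [if_neg (by omega), if_pos (by omega), if_neg (by omega), if_pos (by omega)]) else
    0

/-- The Yoneda class of the extension `E` is zero, i.e. `E` is Yoneda equivalent
to the trivial extension. -/
def PreExt.classZero (hn : 2 ≤ n) (E : PreExt C n) : Prop :=
  PreExt.YEquiv E (trivPreExt n hn (E.X (n + 1)) (E.X 0))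

end Triv

/-!
A factorization `φ_k = π ≫ ι` through an epimorphism `π : E_k ⟶ Q` is enough. As `φ_{k+1}` is a
monomorphism, the square `E.d k ≫ φ_{k+1} = π ≫ (ι ≫ G.d k)` has a diagonal filler
`c : Q ⟶ E_{k+1}`. For `P = G_{k-1} ×_{G_k} Q`, exactness at `P` is exactness of `G` at
`G_{k-1}`, since `P ⟶ Q` has the same kernel as `G_{k-1} ⟶ G_k`; exactness at `Q` is exactness
of `G` at `G_k`, since `ker c = ker (ι ≫ G.d k)`; and exactness at `E_{k+1}` is that of `E`, since
`π` is epi. The maps `φ_i` for `i ≤ k - 2`, `(φ_{k-1}, E.d (k-1) ≫ π)`, `π` and the identities in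
degrees above `k` form a morphism from `E` to the new extension.
-/

section Exactness

variable {C : Type u} [Category.{v} C] [Abelian C]

/-- The composable maps `f` and `g` have zero composite and form a sequence exact in the middle. -/
def IsExactPair {X Y Z : C} (f : X ⟶ Y) (g : Y ⟶ Z) : Prop :=
  ∃ w : f ≫ g = 0, (ShortComplex.mk f g w).Exact

variable {K W X Y Z P Q : C}

lemma IsExactPair.of_same_kernel {e : K ⟶ W} {f : W ⟶ X} {a : W ⟶ P} (hf : IsExactPair e f)
    (ha : ∀ ⦃A : C⦄ (x : A ⟶ W), x ≫ a = 0 ↔ x ≫ f = 0) : IsExactPair e a := by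
  obtain ⟨w, hf⟩ := hf
  refine ⟨(ha e).2 w, ?_⟩
  rw [ShortComplex.exact_iff_exact_up_to_refinements] at hf ⊢
  exact fun A x hx => hf x ((ha x).1 hx)

lemma IsExactPair.of_epi_comp {e : K ⟶ Q} {c : Q ⟶ X} {d : X ⟶ Y} [Epi e]
    (h : IsExactPair (e ≫ c) d) : IsExactPair c d := by
  obtain ⟨w, h⟩ := h
  have hcd : c ≫ d = 0 := by rwa [← cancel_epi e, comp_zero, ← assoc]
  let π : ShortComplex.mk (e ≫ c) d w ⟶ ShortComplex.mk c d hcd :=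
    { τ₁ := e, τ₂ := 𝟙 X, τ₃ := 𝟙 Y }
  have : Epi π.τ₁ := ‹Epi e›
  have : IsIso π.τ₂ := inferInstanceAs (IsIso (𝟙 X))
  have : Mono π.τ₃ := inferInstanceAs (Mono (𝟙 Y))
  exact ⟨hcd, (ShortComplex.exact_iff_of_epi_of_isIso_of_mono π).1 h⟩

variable {fst : P ⟶ X} {snd : P ⟶ Q} {g : X ⟶ Y} {ι : Q ⟶ Y} (sq : IsPullback fst snd g ι)
include sq

lemma comp_eq_zero_iff_of_isPullback {f : W ⟶ X} {a : W ⟶ P} (ha₁ : a ≫ fst = f)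
    (ha₂ : a ≫ snd = 0) {A : C} (x : A ⟶ W) : x ≫ a = 0 ↔ x ≫ f = 0 := by
  refine ⟨fun hx => by rw [← ha₁, reassoc_of% hx, zero_comp], fun hx => sq.hom_ext ?_ ?_⟩
  · rw [assoc, ha₁, hx, zero_comp]
  · rw [assoc, ha₂, comp_zero, zero_comp]

lemma IsExactPair.lift_zero_snd {f : W ⟶ X} (h : IsExactPair f g) {a : W ⟶ P}
    (ha₁ : a ≫ fst = f) (ha₂ : a ≫ snd = 0) : IsExactPair a snd := by
  obtain ⟨w, h⟩ := h
  refine ⟨ha₂, ?_⟩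
  rw [ShortComplex.exact_iff_exact_up_to_refinements] at h ⊢
  intro A x (hx : x ≫ snd = 0)
  have hxg : (x ≫ fst) ≫ g = 0 := by rw [assoc, sq.w, reassoc_of% hx, zero_comp]
  obtain ⟨A', p, hp, y, hy⟩ := h (x ≫ fst) hxg
  dsimp only at y hy
  refine ⟨A', p, hp, y, sq.hom_ext ?_ ?_⟩
  · rw [assoc, assoc, ha₁, hy]
  · rw [assoc, assoc, ha₂, hx, comp_zero, comp_zero]

lemma IsExactPair.snd_of_mono {h : Y ⟶ Z} (hgh : IsExactPair g h) {c : Q ⟶ W} {μ : W ⟶ Z}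
    [Mono μ] (hc : c ≫ μ = ι ≫ h) : IsExactPair snd c := by
  obtain ⟨w, hgh⟩ := hgh
  have hsc : snd ≫ c = 0 := by
    rw [← cancel_mono μ, assoc, hc, ← reassoc_of% sq.w, w, comp_zero, zero_comp]
  refine ⟨hsc, ?_⟩
  rw [ShortComplex.exact_iff_exact_up_to_refinements] at hgh ⊢
  intro A x (hx : x ≫ c = 0)
  have hxh : (x ≫ ι) ≫ h = 0 := by rw [assoc, ← hc, reassoc_of% hx, zero_comp]
  obtain ⟨A', p, hp, y, hy⟩ := hgh (x ≫ ι) hxh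
  dsimp only at y hy
  exact ⟨A', p, hp, sq.lift y (p ≫ x) (by rw [← hy, assoc]), (sq.lift_snd _ _ _).symm⟩

end Exactness

namespace PreExt

variable {C : Type u} [Category.{v} C] [Abelian C] {n n' : ℕ} {P Q : C}

/-- The sequence `X 1 ⟶ X 2 ⟶ ⋯`, reindexed to start in degree `0`. -/
def tail (E : PreExt C n) : PreExt C (n - 1) where
  X i := E.X (i + 1)
  d i := E.d (i + 1)

/-- The objects of `PreExt.splice`. The recursion drops the initial terms of `G` and `E`
simultaneously, so that the differentials can be defined without any `eqToHom`. -/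
def spliceX (P Q : C) : ∀ {n' n : ℕ}, ℕ → ℕ → PreExt C n' → PreExt C n → C
  | _, _, 0, _, G, _ => G.X 0
  | _, _, i + 1, 0, _, E =>
    match i with
    | 0 => P
    | 1 => Q
    | i + 2 => E.X (i + 3)
  | _, _, i + 1, m + 1, G, E => spliceX P Q i m G.tail E.tail

/-- The differentials of `PreExt.splice`. -/
def spliceD (b : P ⟶ Q) : ∀ {n' n : ℕ} (i m : ℕ) (G : PreExt C n') (E : PreExt C n)
    (_ : G.X m ⟶ P) (_ : Q ⟶ E.X (m + 3)), spliceX P Q i m G E ⟶ spliceX P Q (i + 1) m G E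
  | _, _, 0, 0, _, _, a, _ => a
  | _, _, 0, _ + 1, G, _, _, _ => G.d 0
  | _, _, i + 1, 0, _, E, _, c =>
    match i with
    | 0 => b
    | 1 => c
    | i + 2 => E.d (i + 3)
  | _, _, i + 1, m + 1, G, E, a, c => spliceD b i m G.tail E.tail a c

/-- The sequence `G₀ ⟶ ⋯ ⟶ Gₘ ⟶ P ⟶ Q ⟶ Eₘ₊₃ ⟶ Eₘ₊₄ ⟶ ⋯` with connecting maps
`a`, `b` and `c`. -/
def splice (m : ℕ) (G : PreExt C n') (E : PreExt C n) (a : G.X m ⟶ P) (b : P ⟶ Q)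
    (c : Q ⟶ E.X (m + 3)) : PreExt C n where
  X i := spliceX P Q i m G E
  d i := spliceD b i m G E a c

section Splice

variable {m : ℕ} {G : PreExt C n'} {E : PreExt C n} {a : G.X m ⟶ P} {b : P ⟶ Q}
  {c : Q ⟶ E.X (m + 3)}

lemma splice_X_of_le {i : ℕ} (hi : i ≤ m) : (splice m G E a b c).X i = G.X i := by
  induction m generalizing n n' i with
  | zero => obtain rfl := Nat.le_zero.1 hi; rfl
  | succ m ih =>
    cases i with
    | zero => rfl
    | succ i => exact ih (G := G.tail) (E := E.tail) (a := a) (c := c) (Nat.le_of_succ_le_succ hi)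

lemma splice_X_add_one : (splice m G E a b c).X (m + 1) = P := by
  induction m generalizing n n' with
  | zero => rfl
  | succ m ih => exact ih (G := G.tail) (E := E.tail) (a := a) (c := c)

lemma splice_X_add_two : (splice m G E a b c).X (m + 2) = Q := by
  induction m generalizing n n' with
  | zero => rfl
  | succ m ih => exact ih (G := G.tail) (E := E.tail) (a := a) (c := c)

lemma splice_X_of_ge {i : ℕ} (hi : m + 3 ≤ i) : (splice m G E a b c).X i = E.X i := by
  induction m generalizing n n' i with
  | zero => obtain ⟨i, rfl⟩ := Nat.exists_eq_add_of_le' hi; rfl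
  | succ m ih =>
    obtain ⟨i, rfl⟩ := Nat.exists_eq_add_of_le' (Nat.one_le_of_lt hi)
    exact ih (G := G.tail) (E := E.tail) (a := a) (c := c) (Nat.le_of_succ_le_succ hi)

lemma splice_d_of_lt {i : ℕ} (hi : i < m) :
    (splice m G E a b c).d i =
      eqToHom (splice_X_of_le (by omega)) ≫ G.d i ≫ eqToHom (splice_X_of_le hi).symm := by
  induction m generalizing n n' i with
  | zero => omega
  | succ m ih =>
    cases i with
    | zero => exact ((id_comp _).trans (comp_id _)).symm
    | succ i => exact ih (G := G.tail) (E := E.tail) (Nat.le_of_succ_le_succ hi)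

lemma splice_d_self :
    (splice m G E a b c).d m =
      eqToHom (splice_X_of_le le_rfl) ≫ a ≫ eqToHom splice_X_add_one.symm := by
  induction m generalizing n n' with
  | zero => exact ((id_comp _).trans (comp_id _)).symm
  | succ m ih => exact ih (G := G.tail) (E := E.tail)

lemma splice_d_add_one :
    (splice m G E a b c).d (m + 1) =
      eqToHom splice_X_add_one ≫ b ≫ eqToHom splice_X_add_two.symm := by
  induction m generalizing n n' with
  | zero => exact ((id_comp _).trans (comp_id _)).symm
  | succ m ih => exact ih (G := G.tail) (E := E.tail)

lemma splice_d_add_two :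
    (splice m G E a b c).d (m + 2) =
      eqToHom splice_X_add_two ≫ c ≫ eqToHom (splice_X_of_ge le_rfl).symm := by
  induction m generalizing n n' with
  | zero => exact ((id_comp _).trans (comp_id _)).symm
  | succ m ih => exact ih (G := G.tail) (E := E.tail)

lemma splice_d_of_ge {i : ℕ} (hi : m + 3 ≤ i) :
    (splice m G E a b c).d i =
      eqToHom (splice_X_of_ge hi) ≫ E.d i ≫
        eqToHom (splice_X_of_ge (Nat.le_succ_of_le hi)).symm := by
  induction m generalizing n n' i with
  | zero =>
    obtain ⟨i, rfl⟩ := Nat.exists_eq_add_of_le' hi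
    exact ((id_comp _).trans (comp_id _)).symm
  | succ m ih =>
    obtain ⟨i, rfl⟩ := Nat.exists_eq_add_of_le' (Nat.one_le_of_lt hi)
    exact ih (G := G.tail) (E := E.tail) (Nat.le_of_succ_le_succ hi)

lemma mono_splice_d_zero (hG : Mono (G.d 0))
    (ha : ∀ ⦃A : C⦄ (x : A ⟶ G.X m), x ≫ a = 0 ↔ x ≫ G.d m = 0) :
    Mono ((splice m G E a b c).d 0) := by
  cases m with
  | zero => exact Preadditive.mono_of_cancel_zero a fun x hx => zero_of_comp_mono _ ((ha x).1 hx)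
  | succ m => exact hG

lemma isExactPair_splice_d (hG : ∀ i < m, IsExactPair (G.d i) (G.d (i + 1)))
    (ha : ∀ ⦃A : C⦄ (x : A ⟶ G.X m), x ≫ a = 0 ↔ x ≫ G.d m = 0)
    (hab : IsExactPair a b) (hbc : IsExactPair b c) (hc : IsExactPair c (E.d (m + 3)))
    {i : ℕ} (hE : m + 3 ≤ i → IsExactPair (E.d i) (E.d (i + 1))) :
    IsExactPair ((splice m G E a b c).d i) ((splice m G E a b c).d (i + 1)) := by
  induction m generalizing n n' i with
  | zero =>
    match i with
    | 0 => exact hab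
    | 1 => exact hbc
    | 2 => exact hc
    | i + 3 => exact hE (by omega)
  | succ m ih =>
    match m, i with
    | 0, 0 => exact (hG 0 one_pos).of_same_kernel ha
    | m + 1, 0 => exact hG 0 (by omega)
    | m, i + 1 =>
      exact ih (G := G.tail) (E := E.tail)
        (fun j hj => hG (j + 1) (by omega)) ha hab hbc hc fun hi => hE (by omega)

lemma isExt_splice (hmn : m + 3 ≤ n) (hE : E.IsExt) (hG₀ : Mono (G.d 0))
    (hG : ∀ i < m, IsExactPair (G.d i) (G.d (i + 1)))
    (ha : ∀ ⦃A : C⦄ (x : A ⟶ G.X m), x ≫ a = 0 ↔ x ≫ G.d m = 0)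
    (hab : IsExactPair a b) (hbc : IsExactPair b c) (hc : IsExactPair c (E.d (m + 3))) :
    (splice m G E a b c).IsExt := by
  obtain ⟨-, hE_epi, hE_exact⟩ := hE
  refine ⟨mono_splice_d_zero hG₀ ha, ?_, fun i hi => ?_⟩
  · rw [splice_d_of_ge hmn]
    infer_instance
  · exact isExactPair_splice_d hG ha hab hbc hc fun _ => hE_exact i hi

lemma exists_hom_splice (φ : ∀ i, E.X i ⟶ G.X i) (p : E.X (m + 1) ⟶ P) (q : E.X (m + 2) ⟶ Q)
    (hφ : ∀ i < m, E.d i ≫ φ (i + 1) = φ i ≫ G.d i) (ha : E.d m ≫ p = φ m ≫ a)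
    (hb : E.d (m + 1) ≫ q = p ≫ b) (hc : E.d (m + 2) = q ≫ c) :
    ∃ ψ : ∀ i, E.X i ⟶ (splice m G E a b c).X i,
      ψ 0 = φ 0 ∧ (∀ i (hi : m + 3 ≤ i), ψ i = eqToHom (splice_X_of_ge hi).symm) ∧
      ∀ i, E.d i ≫ ψ (i + 1) = ψ i ≫ (splice m G E a b c).d i := by
  induction m generalizing n n' with
  | zero =>
    refine ⟨fun | 0 => φ 0 | 1 => p | 2 => q | i + 3 => 𝟙 _, rfl, fun i hi => ?_, fun i => ?_⟩
    · obtain ⟨i, rfl⟩ := Nat.exists_eq_add_of_le' hi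
      rfl
    · match i with
      | 0 => exact ha
      | 1 => exact hb
      | 2 => exact (comp_id _).trans hc
      | i + 3 => exact (comp_id _).trans (id_comp _).symm
  | succ m ih =>
    obtain ⟨ψ, hψ₀, hψ, hcomm⟩ := ih (G := G.tail) (E := E.tail)
      (fun i => φ (i + 1)) p q (fun i hi => hφ (i + 1) (by omega)) ha hb hc
    refine ⟨fun | 0 => φ 0 | i + 1 => ψ i, rfl, fun i hi => ?_, fun i => ?_⟩
    · obtain ⟨i, rfl⟩ := Nat.exists_eq_add_of_le' (Nat.one_le_of_lt hi)
      exact hψ i (Nat.le_of_succ_le_succ hi)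
    · match i with
      | 0 => exact (congrArg (E.d 0 ≫ ·) hψ₀).trans (hφ 0 m.succ_pos)
      | i + 1 => exact hcomm i

lemma ladder_splice (hmn : m + 3 ≤ n) (φ : ∀ i, E.X i ⟶ G.X i) (p : E.X (m + 1) ⟶ P)
    (q : E.X (m + 2) ⟶ Q) (h₀ : E.X 0 = G.X 0) (hφ₀ : φ 0 = eqToHom h₀)
    (hφ : ∀ i < m, E.d i ≫ φ (i + 1) = φ i ≫ G.d i) (ha : E.d m ≫ p = φ m ≫ a)
    (hb : E.d (m + 1) ≫ q = p ≫ b) (hc : E.d (m + 2) = q ≫ c) :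
    Ladder E (splice m G E a b c) := by
  obtain ⟨ψ, hψ₀, hψ, hcomm⟩ := exists_hom_splice φ p q hφ ha hb hc
  exact ⟨h₀.trans (splice_X_of_le m.zero_le).symm, (splice_X_of_ge (by omega)).symm, ψ,
    hψ₀.trans hφ₀, hψ _ (by omega), fun i _ => hcomm i⟩

end Splice

end PreExt

section Modification

variable {C : Type u} [Category.{v} C] [Abelian C]

theorem statement15_general {n n' m : ℕ} (hmn : m + 3 ≤ n)
    {E : PreExt C n} (hE : E.IsExt) {G : PreExt C n'} (hG₀ : Mono (G.d 0))
    (hG : ∀ i ≤ m + 1, IsExactPair (G.d i) (G.d (i + 1)))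
    (φ : ∀ i, E.X i ⟶ G.X i) (h₀ : E.X 0 = G.X 0) (hφ₀ : φ 0 = eqToHom h₀)
    (hsq : ∀ i ≤ m + 2, E.d i ≫ φ (i + 1) = φ i ≫ G.d i) (hmono : Mono (φ (m + 3)))
    {P Q : C} {π : E.X (m + 2) ⟶ Q} {ι : Q ⟶ G.X (m + 2)} [Epi π] (hπι : π ≫ ι = φ (m + 2))
    {fst : P ⟶ G.X (m + 1)} {snd : P ⟶ Q} (sq : IsPullback fst snd (G.d (m + 1)) ι) :
    ∃ N : PreExt C n, N.IsExt ∧ PreExt.YEquiv N E ∧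
      ∃ (hlow : ∀ i, i ≤ m → N.X i = G.X i) (hP : N.X (m + 1) = P) (hQ : N.X (m + 2) = Q)
        (hhigh : ∀ i, m + 3 ≤ i → N.X i = E.X i),
        (∀ i (h : i + 1 ≤ m), N.d i =
          eqToHom (hlow i (by omega)) ≫ G.d i ≫ eqToHom (hlow (i + 1) h).symm) ∧
        N.d m ≫ eqToHom hP ≫ fst = eqToHom (hlow m le_rfl) ≫ G.d m ∧
        N.d m ≫ eqToHom hP ≫ snd = 0 ∧
        N.d (m + 1) = eqToHom hP ≫ snd ≫ eqToHom hQ.symm ∧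
        π ≫ eqToHom hQ.symm ≫ N.d (m + 2) =
          E.d (m + 2) ≫ eqToHom (hhigh (m + 3) le_rfl).symm ∧
        ∀ i (h : m + 3 ≤ i), N.d i =
          eqToHom (hhigh i h) ≫ E.d i ≫ eqToHom (hhigh (i + 1) (by omega)).symm := by
  obtain ⟨a, ha₁, ha₂⟩ : ∃ a : G.X m ⟶ P, a ≫ fst = G.d m ∧ a ≫ snd = 0 :=
    sq.exists_lift _ _ (by rw [(hG m (by omega)).1, zero_comp])
  obtain ⟨c, hπc, hcφ⟩ : ∃ c, π ≫ c = E.d (m + 2) ∧ c ≫ φ (m + 3) = ι ≫ G.d (m + 2) :=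
    have h : CommSq (E.d (m + 2)) π (φ (m + 3)) (ι ≫ G.d (m + 2)) :=
      ⟨by rw [hsq _ le_rfl, ← hπι, assoc]⟩
    have := strongEpi_of_epi π
    ⟨h.lift, h.fac_left, h.fac_right⟩
  obtain ⟨p, hp₁, hp₂⟩ : ∃ p, p ≫ fst = φ (m + 1) ∧ p ≫ snd = E.d (m + 1) ≫ π :=
    sq.exists_lift _ _ (by rw [assoc, hπι, hsq _ (by omega)])
  have hpa : E.d m ≫ p = φ m ≫ a := by
    apply sq.hom_ext
    · rw [assoc, assoc, hp₁, ha₁, hsq m (by omega)]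
    · rw [assoc, assoc, hp₂, ha₂, comp_zero, reassoc_of% (hE.2.2 m (by omega)).1, zero_comp]
  have hN : (PreExt.splice m G E a snd c).IsExt :=
    PreExt.isExt_splice hmn hE hG₀ (fun i hi => hG i (by omega))
      (fun _ => comp_eq_zero_iff_of_isPullback sq ha₁ ha₂)
      ((hG m (by omega)).lift_zero_snd sq ha₁ ha₂) ((hG (m + 1) le_rfl).snd_of_mono sq hcφ)
      (.of_epi_comp (e := π) (by rw [hπc]; exact hE.2.2 (m + 2) (by omega)))
  have hEN : PreExt.Ladder E (PreExt.splice m G E a snd c) :=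
    PreExt.ladder_splice hmn φ p π h₀ hφ₀ (fun i hi => hsq i (by omega)) hpa hp₂.symm hπc.symm
  refine ⟨_, hN, .symm _ _ (.rel _ _ ⟨hE, hN, hEN⟩), fun _ => PreExt.splice_X_of_le,
    PreExt.splice_X_add_one, PreExt.splice_X_add_two, fun _ => PreExt.splice_X_of_ge,
    fun _ => PreExt.splice_d_of_lt, ?_, ?_, PreExt.splice_d_add_one, ?_,
    fun _ => PreExt.splice_d_of_ge⟩
  · simp [PreExt.splice_d_self, ha₁]
  · simp [PreExt.splice_d_self, ha₂]
  · simp [PreExt.splice_d_add_two, reassoc_of% hπc]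

end Modification

set_option maxHeartbeats 1000000

/-- Let `E` be an `n`-extension `0 → B → E₁ → ⋯ → Eₙ → A → 0` and
`φ : E → G` a morphism of complexes to an `(n-1)`-extension
`G = (0 → B → G₁ → ⋯ → G_{n-1} → Eₙ → 0)` inducing the identity on `B` and `Eₙ`.
Fix `2 ≤ k ≤ n-1` and assume `φᵢ` is a monomorphism for `i > k`.  With
`Ē_k := E_k / Ker(φ_k)` (the coimage of `φ_k`) and
`Ē_{k-1} := G_{k-1} ×_{G_k} Ē_k`, the sequence
`0 → B → G₁ → ⋯ → G_{k-2} → Ē_{k-1} → Ē_k → E_{k+1} → ⋯ → Eₙ → A → 0`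
(with the evident induced maps) is an `n`-extension representing the same Yoneda
class as `E`. -/
theorem statement15 {C : Type u} [Category.{v} C] [Abelian C]
    (n : ℕ) (hn : 3 ≤ n) (E : PreExt C n) (hE : E.IsExt)
    (G : PreExt C (n - 1)) (hG : G.IsExt)
    (h0 : E.X 0 = G.X 0) (h1 : E.X n = G.X n)
    (φ : ∀ i, E.X i ⟶ G.X i)
    (hφ0 : φ 0 = eqToHom h0) (hφn : φ n = eqToHom h1)
    (hsq : ∀ i, i + 1 ≤ n → E.d i ≫ φ (i + 1) = φ i ≫ G.d i)
    (k : ℕ) (hk2 : 2 ≤ k) (hkn : k ≤ n - 1)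
    (hmono : ∀ i, k < i → i ≤ n → Mono (φ i)) :
    ∃ N : PreExt C n, N.IsExt ∧ PreExt.YEquiv N E ∧
      ∃ (hlow : ∀ i, i ≤ k - 2 → N.X i = G.X i)
        (hbar1 : N.X (k - 1) =
          pullback (G.d (k - 1) ≫ eqToHom (congrArg G.X (by omega : k - 1 + 1 = k))) (Abelian.factorThruCoimage (φ k)))
        (hbar : N.X k = Abelian.coimage (φ k))
        (hhigh : ∀ i, k + 1 ≤ i → N.X i = E.X i),
        -- in degrees `≤ k-3` the differentials are those of `G`
        (∀ i (h : i + 1 ≤ k - 2),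
          N.d i = eqToHom (hlow i (by omega)) ≫ G.d i ≫
            eqToHom (hlow (i + 1) h).symm) ∧
        -- the map `G_{k-2} → Ē_{k-1}` has components `G.d (k-2)` and `0`
        (N.d (k - 2) ≫
            eqToHom (show N.X (k - 2 + 1) =
              pullback (G.d (k - 1) ≫ eqToHom (congrArg G.X (by omega : k - 1 + 1 = k))) (Abelian.factorThruCoimage (φ k)) by
                rw [show k - 2 + 1 = k - 1 by omega]; exact hbar1) ≫
            pullback.fst (G.d (k - 1) ≫ eqToHom (congrArg G.X (by omega : k - 1 + 1 = k))) (Abelian.factorThruCoimage (φ k)) =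
          eqToHom (hlow (k - 2) le_rfl) ≫ G.d (k - 2) ≫
            eqToHom (congrArg G.X (by omega : k - 2 + 1 = k - 1))) ∧
        (N.d (k - 2) ≫
            eqToHom (show N.X (k - 2 + 1) =
              pullback (G.d (k - 1) ≫ eqToHom (congrArg G.X (by omega : k - 1 + 1 = k))) (Abelian.factorThruCoimage (φ k)) by
                rw [show k - 2 + 1 = k - 1 by omega]; exact hbar1) ≫
            pullback.snd (G.d (k - 1) ≫ eqToHom (congrArg G.X (by omega : k - 1 + 1 = k))) (Abelian.factorThruCoimage (φ k)) = 0) ∧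
        -- the map `Ē_{k-1} → Ē_k` is the second projection
        (N.d (k - 1) = eqToHom hbar1 ≫
            pullback.snd (G.d (k - 1) ≫ eqToHom (congrArg G.X (by omega : k - 1 + 1 = k))) (Abelian.factorThruCoimage (φ k)) ≫
            eqToHom (show Abelian.coimage (φ k) = N.X (k - 1 + 1) by
              rw [show k - 1 + 1 = k by omega]; exact hbar.symm)) ∧
        -- the map `Ē_k → E_{k+1}` is induced by `E.d k`
        (Abelian.coimage.π (φ k) ≫ eqToHom hbar.symm ≫ N.d k =
          E.d k ≫ eqToHom (hhigh (k + 1) le_rfl).symm) ∧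
        -- in degrees `≥ k+1` the differentials are those of `E`
        (∀ i (hi : k + 1 ≤ i) (hi' : i ≤ n),
          N.d i = eqToHom (hhigh i (by omega)) ≫ E.d i ≫
            eqToHom (hhigh (i + 1) (by omega)).symm) := by
  obtain ⟨m, rfl⟩ := Nat.exists_eq_add_of_le' hk2
  have sq : IsPullback (pullback.fst (G.d (m + 1) ≫ eqToHom rfl)
      (Abelian.factorThruCoimage (φ (m + 2)))) (pullback.snd _ _) (G.d (m + 1))
      (Abelian.factorThruCoimage (φ (m + 2))) := by
    simpa using IsPullback.of_hasPullback (G.d (m + 1) ≫ eqToHom rfl) _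
  obtain ⟨N, hN, hNE, hlow, hP, hQ, hhigh, hd, hfst, hsnd, hb, hc, hd'⟩ :=
    statement15_general (by omega) hE hG.1 (fun i hi => hG.2.2 i (by omega)) φ h0 hφ0
      (fun i hi => hsq i (by omega)) (hmono _ (by omega) (by omega)) (Abelian.coimage.fac _) sq
  exact ⟨N, hN, hNE, hlow, hP, hQ, hhigh, hd,
    hfst.trans (congrArg (_ ≫ ·) (comp_id (G.d m)).symm), hsnd, hb, hc, fun i hi _ => hd' i hi⟩
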